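/- arXiv:2212.00418 — 6 statements merged into one kernel-verified Lean document; each statement's English description precedes it below -/
import Mathlib

section
/- Let η ≥ 1 be an integer, let G be a finite simple graph, let H ⊆ V(G), and let T, C₁, …, C_ℓ be pairwise disjoint subsets of V(G) such that each C_i is disjoint from H and: (a) the induced subgraph G[C_i] is connected for every i ∈ [ℓ]; (b) N_G(C_i) ∖ H = T for every i ∈ [ℓ]; and (c) td(G[C_i]) = td(G[C_j]) for all i, j ∈ [ℓ]. Let S be an η-treedepth deletion set of G with H ⊆ S, and let 𝒥 = {C_i : i ∈ [ℓ], C_i ∩ S = ∅}. If |𝒥| ≥ η + 1, then S ∖ (C₁ ∪ ⋯ ∪ C_ℓ) is an η-treedepth deletion set of G. -/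
open SimpleGraph Set

variable {V : Type*}

/-- The connected component of `x` inside the induced subgraph `G[S]`, as a subset of `V`. -/
def compIn (G : SimpleGraph V) (S : Set V) (x : V) : Set V :=
  {y | ∃ (hx : x ∈ S) (hy : y ∈ S), (G.induce S).Reachable ⟨x, hx⟩ ⟨y, hy⟩}

/-- `tdLE G n S` means that the treedepth of the induced subgraph `G[S]` is at most `n`,
following the recursive definition of treedepth: a graph has treedepth at most `n+1`
iff from every connected component one can delete a vertex leaving a graph of
treedepth at most `n`; only the empty graph has treedepth at most `0`. -/
def tdLE (G : SimpleGraph V) : ℕ → Set V → Prop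
  | 0, S => S = ∅
  | n+1, S => ∀ x ∈ S, ∃ v ∈ compIn G S x, tdLE G n (compIn G S x \ {v})

/-- The treedepth of the induced subgraph `G[S]`. -/
noncomputable def td (G : SimpleGraph V) (S : Set V) : ℕ :=
  sInf {n | tdLE G n S}

/-- `N_G(C)`: the set of vertices outside `C` having a neighbor in `C`. -/
def nbhd (G : SimpleGraph V) (C : Set V) : Set V :=
  {v | v ∉ C ∧ ∃ u ∈ C, G.Adj u v}

/-- `C` is a connected component of the induced subgraph `G[R]`. -/
def IsCompOf (G : SimpleGraph V) (R C : Set V) : Prop :=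
  ∃ x ∈ R, C = compIn G R x

/-- `S` is an `η`-treedepth deletion set of `G`: `td(G − S) ≤ η`. -/
def IsTDS (G : SimpleGraph V) (η : ℕ) (S : Set V) : Prop :=
  td G Sᶜ ≤ η

/-- `S` is a connected `η`-treedepth deletion set of `G`. -/
def IsCTDS (G : SimpleGraph V) (η : ℕ) (S : Set V) : Prop :=
  IsTDS G η S ∧ S.Nonempty ∧ (G.induce S).Connected

/-- A rooted forest with vertex set `A ⊆ V`, given by its (reflexive) ancestor relation:
`anc u v` means `u` is an ancestor of `v` (every vertex being an ancestor of itself). -/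
structure RootedForest (V : Type*) (A : Set V) where
  anc : V → V → Prop
  mem_left : ∀ {u v}, anc u v → u ∈ A
  mem_right : ∀ {u v}, anc u v → v ∈ A
  refl : ∀ v ∈ A, anc v v
  trans : ∀ {u v w}, anc u v → anc v w → anc u w
  antisymm : ∀ {u v}, anc u v → anc v u → u = v
  chain : ∀ {u w v}, anc u v → anc w v → anc u w ∨ anc w u

/-- Depth of a rooted forest: the maximum number of vertices on a root-to-leaf path,
i.e. the maximum number of ancestors of a vertex. -/
noncomputable def RootedForest.depth [Fintype V] {A : Set V} (F : RootedForest V A) : ℕ :=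
  Finset.univ.sup fun v : V => {u | F.anc u v}.ncard

/-- `F` is a treedepth decomposition of `G[A]`: the endpoints of every edge of `G[A]`
are in ancestor-descendant relation in `F`. -/
def IsTDDecompOn (G : SimpleGraph V) (A : Set V) (F : RootedForest V A) : Prop :=
  ∀ u v, u ∈ A → v ∈ A → G.Adj u v → F.anc u v ∨ F.anc v u

/-- `A` is an `(x,y)`-vertex cut in `G`: `A` avoids `x` and `y` and there is
no path from `x` to `y` in `G − A`. -/
def IsVertexCut (G : SimpleGraph V) (x y : V) (A : Set V) : Prop :=
  ∃ (hx : x ∈ Aᶜ) (hy : y ∈ Aᶜ), ¬ (G.induce Aᶜ).Reachable ⟨x, hx⟩ ⟨y, hy⟩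

/-- The weight of a subgraph: the sum of the weights of its edges. -/
noncomputable def subWeight (w : Sym2 V → ℕ) {G : SimpleGraph V} (T : G.Subgraph) : ℕ :=
  ∑ᶠ e ∈ T.edgeSet, w e

/-- The leaves (vertices with exactly one neighbor) of a subgraph. -/
def subLeaves {G : SimpleGraph V} (T : G.Subgraph) : Set V :=
  {v | (T.neighborSet v).ncard = 1}

/-- `T` is a Steiner tree for the terminal set `R` in `G`. -/
def IsSteinerTree (G : SimpleGraph V) (R : Set V) (T : G.Subgraph) : Prop :=
  T.coe.IsTree ∧ R ⊆ T.verts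

/-- `T` is a `t`-component for `R`: a tree with at most `t` leaves, all of which lie in `R`. -/
def IsTComponent (G : SimpleGraph V) (R : Set V) (t : ℕ) (T : G.Subgraph) : Prop :=
  T.coe.IsTree ∧ (subLeaves T).ncard ≤ t ∧ subLeaves T ⊆ R

theorem mem_compIn_self {G : SimpleGraph V} {S : Set V} {x : V} (hx : x ∈ S) :
    x ∈ compIn G S x := ⟨hx, hx, Reachable.refl _⟩

theorem compIn_subset (G : SimpleGraph V) (S : Set V) (x : V) : compIn G S x ⊆ S :=
  fun _ ⟨_, hy, _⟩ => hy

theorem compIn_closed {G : SimpleGraph V} {S : Set V} {x y z : V} (hy : y ∈ compIn G S x)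
    (hz : z ∈ S) (h : G.Adj y z) : z ∈ compIn G S x := by
  obtain ⟨hx, hy, hr⟩ := hy
  refine ⟨hx, hz, hr.trans (Adj.reachable ?_)⟩
  simpa using h

theorem compIn_min {G : SimpleGraph V} {S D : Set V} {x : V} (hx : x ∈ D)
    (hD : ∀ y ∈ D, ∀ z ∈ S, G.Adj y z → z ∈ D) : compIn G S x ⊆ D := by
  rintro y ⟨hxS, hyS, ⟨p⟩⟩
  have key : ∀ (a b : S), (G.induce S).Walk a b → a.1 ∈ D → b.1 ∈ D := by
    intro a b p
    induction p with
    | nil => exact id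
    | cons h _ ih => exact fun ha => ih (hD _ ha _ (Subtype.prop _) (by simpa using h))
  exact key _ _ p hx

theorem compIn_mono {G : SimpleGraph V} {S S' : Set V} (h : S' ⊆ S) {x : V} :
    compIn G S' x ⊆ compIn G S x := by
  intro y hy
  have hx : x ∈ S' := hy.1
  exact compIn_min (mem_compIn_self (h hx)) (fun a ha b hb hab => compIn_closed ha (h hb) hab) hy

theorem tdLE_mono {G : SimpleGraph V} : ∀ (n : ℕ) {S S' : Set V}, S' ⊆ S → tdLE G n S →
    tdLE G n S'
  | 0, S, S', h, hS => by
    simp only [tdLE] at hS ⊢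
    subst hS
    exact subset_empty_iff.1 h
  | n+1, S, S', h, hS => by
    simp only [tdLE] at hS ⊢
    intro x hx
    obtain ⟨v, hv, ht⟩ := hS x (h hx)
    have hc := compIn_mono (G := G) h (x := x)
    by_cases hv' : v ∈ compIn G S' x
    · exact ⟨v, hv', tdLE_mono n (sdiff_subset_sdiff_left hc) ht⟩
    · refine ⟨x, mem_compIn_self hx, tdLE_mono n ?_ ht⟩
      rintro y ⟨hy, _⟩
      exact ⟨hc hy, fun e => hv' (by rw [← show y = v from e]; exact hy)⟩

theorem tdLE_succ_of_diff {G : SimpleGraph V} {n : ℕ} {B : Set V} {v : V}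
    (h : tdLE G n (B \ {v})) : tdLE G (n+1) B := by
  simp only [tdLE]
  intro x hx
  by_cases hv' : v ∈ compIn G B x
  · exact ⟨v, hv', tdLE_mono n (sdiff_subset_sdiff_left (compIn_subset _ _ _)) h⟩
  · refine ⟨x, mem_compIn_self hx, tdLE_mono n ?_ h⟩
    rintro y ⟨hy, _⟩
    exact ⟨compIn_subset _ _ _ hy, fun e => hv' (by rw [← show y = v from e]; exact hy)⟩

theorem tdLE_succ {G : SimpleGraph V} {n : ℕ} {B : Set V} (h : tdLE G n B) :
    tdLE G (n+1) B := by
  simp only [tdLE]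
  intro x hx
  exact ⟨x, mem_compIn_self hx, tdLE_mono n (sdiff_subset.trans (compIn_subset _ _ _)) h⟩

theorem tdLE_le {G : SimpleGraph V} {n m : ℕ} {B : Set V} (hnm : n ≤ m) (h : tdLE G n B) :
    tdLE G m B := by
  induction hnm with
  | refl => exact h
  | step _ ih => exact tdLE_succ ih

theorem exists_tdLE [Finite V] (G : SimpleGraph V) (B : Set V) : ∃ n, tdLE G n B := by
  induction B, B.toFinite using Set.Finite.induction_on with
  | empty => exact ⟨0, rfl⟩
  | @insert a s ha _ ih =>
    obtain ⟨n, hn⟩ := ih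
    exact ⟨n+1, tdLE_succ_of_diff (v := a) (tdLE_mono n (by simp) hn)⟩

theorem td_le_iff [Finite V] (G : SimpleGraph V) (B : Set V) (n : ℕ) :
    td G B ≤ n ↔ tdLE G n B :=
  ⟨fun h => tdLE_le h (Nat.sInf_mem (s := {n | tdLE G n B}) (exists_tdLE G B)),
    fun h => Nat.sInf_le h⟩

theorem tdLE_local {G : SimpleGraph V} {n : ℕ} {B : Set V}
    (h : ∀ x ∈ B, ∃ D ⊆ B, x ∈ D ∧ (∀ y ∈ D, ∀ z ∈ B, G.Adj y z → z ∈ D) ∧ tdLE G n D) :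
    tdLE G n B := by
  cases n with
  | zero =>
    simp only [tdLE] at h ⊢
    refine eq_empty_iff_forall_notMem.2 fun x hx => ?_
    obtain ⟨D, _, hxD, _, hD⟩ := h x hx
    simp [hD] at hxD
  | succ n =>
    simp only [tdLE] at h ⊢
    intro x hx
    obtain ⟨D, hDB, hxD, hcl, hD⟩ := h x hx
    have e : compIn G B x = compIn G D x := by
      apply Subset.antisymm _ (compIn_mono hDB)
      apply compIn_min (mem_compIn_self hxD)
      intro y hy z hz hyz
      exact compIn_closed hy (hcl y (compIn_subset _ _ _ hy) z hz hyz) hyz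
    rw [e]
    exact hD x hxD

theorem main_aux {G : SimpleGraph V} {T : Set V} {ℓ : ℕ} {C : Fin ℓ → Set V}
    (hTC : ∀ i, Disjoint T (C i))
    (hCC : ∀ i j, i ≠ j → Disjoint (C i) (C j))
    (hconn : ∀ i, (G.induce (C i)).Connected)
    (hT : ∀ i, ∀ t ∈ T, ∃ u ∈ C i, G.Adj u t)
    (htd : ∀ i j k, tdLE G k (C i) → tdLE G k (C j)) :
    ∀ (n : ℕ) (A : Set V) (J : Finset (Fin ℓ)),
      (∀ i, ∀ u ∈ C i, ∀ w ∈ A ∪ ⋃ i, C i, G.Adj u w → w ∈ C i ∨ w ∈ T) →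
      (∀ j ∈ J, C j ⊆ A) → n + 1 ≤ J.card → tdLE G n A → tdLE G n (A ∪ ⋃ i, C i) := by
  intro n
  induction n with
  | zero =>
    intro A J _ hJA hJ hA
    obtain ⟨j, hj⟩ := Finset.card_pos.1 (by omega : 0 < J.card)
    obtain ⟨⟨x, hx⟩⟩ := (hconn j).nonempty
    have := hJA j hj hx
    simp only [tdLE] at hA
    simp [hA] at this
  | succ n ih =>
    intro A J hN hJA hJ hA
    by_cases hTA : ∃ t ∈ T, t ∈ A
    · obtain ⟨t, htT, htA⟩ := hTA
      obtain ⟨v, hv, hK⟩ := hA t htA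
      set K := compIn G A t with hKdef
      have hKA : K ⊆ A := compIn_subset _ _ _
      have htK : t ∈ K := mem_compIn_self htA
      have hCK : ∀ j ∈ J, C j ⊆ K := by
        intro j hj z hz
        obtain ⟨u, hu, hut⟩ := hT j t htT
        have huK : u ∈ K := compIn_closed htK (hJA j hj hu) hut.symm
        have hzu : z ∈ compIn G (C j) u := ⟨hu, hz, (hconn j).preconnected _ _⟩
        exact compIn_min huK (fun a ha b hb hab => compIn_closed ha (hJA j hj hb) hab) hzu
      have hTK : ∀ s ∈ T, s ∈ A → s ∈ K := by
        intro s hs hsA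
        obtain ⟨j, hj⟩ := Finset.card_pos.1 (by omega : 0 < J.card)
        obtain ⟨u, hu, hus⟩ := hT j s hs
        exact compIn_closed (hCK j hj hu) hsA hus
      classical
      have hcard : n + 1 ≤ (J.filter fun j => v ∉ C j).card := by
        have h1 : (J.filter fun j => v ∈ C j).card ≤ 1 := by
          rw [Finset.card_le_one]
          intro a ha b hb
          by_contra hab
          exact Set.disjoint_left.1 (hCC a b hab) (Finset.mem_filter.1 ha).2
            (Finset.mem_filter.1 hb).2
        have h2 := Finset.card_filter_add_card_filter_not (s := J) (fun j => v ∈ C j)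
        omega
      have hI := ih (K \ {v}) (J.filter fun j => v ∉ C j)
        (fun i u hu w hw => hN i u hu w
          (union_subset_union_left _ (sdiff_subset.trans hKA) hw))
        (fun j hj z hz => ⟨hCK j (Finset.mem_filter.1 hj).1 hz, fun e =>
          (Finset.mem_filter.1 hj).2 (by rw [← show z = v from e]; exact hz)⟩) hcard hK
      have hKU : tdLE G (n+1) (K ∪ ⋃ i, C i) := by
        apply tdLE_succ_of_diff (v := v)
        refine tdLE_mono n ?_ hI
        rintro y ⟨hy | hy, hyv⟩
        · exact Or.inl ⟨hy, hyv⟩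
        · exact Or.inr hy
      have hclosed : ∀ y ∈ K ∪ ⋃ i, C i, ∀ z ∈ A ∪ ⋃ i, C i, G.Adj y z →
          z ∈ K ∪ ⋃ i, C i := by
        rintro y hy z hz hyz
        rcases hz with hz' | hz'
        · rcases hy with hy | hy
          · exact Or.inl (compIn_closed hy hz' hyz)
          · obtain ⟨i, hi⟩ := mem_iUnion.1 hy
            rcases hN i y hi z (Or.inl hz') hyz with h | h
            · exact Or.inr (mem_iUnion.2 ⟨i, h⟩)
            · exact Or.inl (hTK z h hz')
        · exact Or.inr hz'
      apply tdLE_local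
      intro x hx
      by_cases hxK : x ∈ K ∪ ⋃ i, C i
      · exact ⟨_, union_subset_union_left _ hKA, hxK, hclosed, hKU⟩
      · refine ⟨(A ∪ ⋃ i, C i) \ (K ∪ ⋃ i, C i), sdiff_subset, ⟨hx, hxK⟩, ?_, ?_⟩
        · rintro y ⟨hy, hyK⟩ z hz hyz
          exact ⟨hz, fun h => hyK (hclosed z h y hy hyz.symm)⟩
        · refine tdLE_mono _ ?_ hA
          rintro y ⟨hy | hy, hyK⟩
          · exact hy
          · exact absurd (Or.inr hy) hyK
    · push Not at hTA
      have hN' : ∀ i, ∀ u ∈ C i, ∀ w ∈ A ∪ ⋃ i, C i, G.Adj u w → w ∈ C i := by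
        intro i u hu w hw huw
        rcases hN i u hu w hw huw with h | h
        · exact h
        · rcases hw with hw | hw
          · exact absurd hw (hTA w h)
          · obtain ⟨k, hk⟩ := mem_iUnion.1 hw
            exact absurd hk (Set.disjoint_left.1 (hTC k) h)
      obtain ⟨j, hj⟩ := Finset.card_pos.1 (by omega : 0 < J.card)
      apply tdLE_local
      intro x hx
      by_cases hxU : x ∈ ⋃ i, C i
      · obtain ⟨i, hi⟩ := mem_iUnion.1 hxU
        exact ⟨C i, fun y hy => Or.inr (mem_iUnion.2 ⟨i, hy⟩), hi, hN' i,
          htd j i _ (tdLE_mono _ (hJA j hj) hA)⟩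
      · refine ⟨(A ∪ ⋃ i, C i) \ ⋃ i, C i, sdiff_subset, ⟨hx, hxU⟩, ?_, ?_⟩
        · rintro y ⟨hy, hyK⟩ z hz hyz
          refine ⟨hz, fun h => hyK ?_⟩
          obtain ⟨i, hi⟩ := mem_iUnion.1 h
          exact mem_iUnion.2 ⟨i, hN' i z hi y hy hyz.symm⟩
        · refine tdLE_mono _ ?_ hA
          rintro y ⟨hy | hy, hyK⟩
          · exact hy
          · exact absurd hy hyK

/-- if at least `η + 1` of the pairwise disjoint, connected, equal-treedepth
sets `C i` with common neighborhood `T` outside `H` avoid the `η`-treedepth deletion set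
`S ⊇ H`, then removing all of the `C i` from `S` still gives an `η`-treedepth deletion set. -/
theorem stmt0 {V : Type*} [Fintype V] (η : ℕ) (hη : 1 ≤ η) (G : SimpleGraph V)
    (H T : Set V) (ℓ : ℕ) (C : Fin ℓ → Set V)
    (hTC : ∀ i, Disjoint T (C i))
    (hCC : ∀ i j, i ≠ j → Disjoint (C i) (C j))
    (hCH : ∀ i, Disjoint (C i) H)
    (hconn : ∀ i, (G.induce (C i)).Connected)
    (hnb : ∀ i, nbhd G (C i) \ H = T)
    (htd : ∀ i j, td G (C i) = td G (C j))
    (S : Set V) (hS : IsTDS G η S) (hHS : H ⊆ S)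
    (hJ : η + 1 ≤ {i : Fin ℓ | C i ∩ S = ∅}.ncard) :
    IsTDS G η (S \ ⋃ i, C i) := by
  classical
  unfold IsTDS at hS ⊢
  rw [td_le_iff] at hS ⊢
  have hcompl : (S \ ⋃ i, C i)ᶜ = Sᶜ ∪ ⋃ i, C i := by
    ext x
    simp only [mem_compl_iff, mem_sdiff, mem_union]
    tauto
  rw [hcompl]
  refine main_aux (T := T) hTC hCC hconn ?_ ?_ η Sᶜ
    (Finset.univ.filter fun i => C i ∩ S = ∅) ?_ ?_ ?_ hS
  · intro i t ht
    rw [← hnb i] at ht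
    exact ht.1.2
  · intro i j k h
    rw [← td_le_iff] at h ⊢
    rw [← htd i j]
    exact h
  · intro i u hu w hw huw
    by_cases hwC : w ∈ C i
    · exact Or.inl hwC
    · right
      rw [← hnb i]
      refine ⟨⟨hwC, u, hu, huw⟩, fun hwH => ?_⟩
      rcases hw with hw | hw
      · exact hw (hHS hwH)
      · obtain ⟨k, hk⟩ := mem_iUnion.1 hw
        exact Set.disjoint_left.1 (hCH k) hk hwH
  · intro j hj z hz hzS
    have h := (Finset.mem_filter.1 hj).2
    have : z ∈ C j ∩ S := ⟨hz, hzS⟩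
    simp [h] at this
  · rw [Set.ncard_eq_toFinset_card'] at hJ
    convert hJ using 2
    ext i
    simp
end

section
/- Let G be a finite simple graph, let X ⊆ V(G), let η ≥ 1, and let F be a treedepth decomposition of G − X of depth at most η. Let Z ⊆ V(G) ∖ X be upward closed in F, i.e., Z contains every F-ancestor of each of its elements. Then for every connected component C of G − (X ∪ Z), every vertex of N_G(C) ∩ Z is an F-ancestor of every vertex of C; in particular, |N_G(C) ∩ Z| ≤ η. -/
open SimpleGraph Set

variable {V : Type*}

/-- if `F` is a treedepth decomposition of `G − X` of depth at most `η`
and `Z ⊆ V(G) ∖ X` is upward closed in `F`, then for every connected component `C` of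
`G − (X ∪ Z)`, every vertex of `N_G(C) ∩ Z` is an `F`-ancestor of every vertex of `C`;
in particular `|N_G(C) ∩ Z| ≤ η`. -/
theorem stmt2 {V : Type*} [Fintype V] (G : SimpleGraph V) (X : Set V)
    (η : ℕ) (hη : 1 ≤ η)
    (F : RootedForest V Xᶜ) (hF : IsTDDecompOn G Xᶜ F) (hdepth : F.depth ≤ η)
    (Z : Set V) (hZX : Z ⊆ Xᶜ) (hup : ∀ z ∈ Z, ∀ u, F.anc u z → u ∈ Z) :
    ∀ C, IsCompOf G (X ∪ Z)ᶜ C →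
      (∀ v ∈ nbhd G C ∩ Z, ∀ c ∈ C, F.anc v c) ∧ (nbhd G C ∩ Z).ncard ≤ η := by
  rintro C ⟨x, hx, rfl⟩
  have step : ∀ v ∈ Z, ∀ a b : ((X ∪ Z)ᶜ : Set V),
      (G.induce (X ∪ Z)ᶜ).Reachable a b → F.anc v a → F.anc v b := by
    rintro v hv a b ⟨w⟩ h
    induction w with
    | nil => exact h
    | @cons a b c hab _ ih =>
      apply ih
      have ha : (a : V) ∈ Xᶜ := fun h' => a.2 (Or.inl h')
      have hb : (b : V) ∈ Xᶜ := fun h' => b.2 (Or.inl h')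
      rcases hF a b ha hb hab with h1 | h1
      · exact F.trans h h1
      · rcases F.chain h h1 with h2 | h2
        · exact h2
        · exact absurd (Or.inr (hup v hv _ h2)) b.2
  have main : ∀ v ∈ nbhd G (compIn G (X ∪ Z)ᶜ x) ∩ Z,
      ∀ c ∈ compIn G (X ∪ Z)ᶜ x, F.anc v c := by
    rintro v ⟨⟨_, u, ⟨_, hu, hxu⟩, huv⟩, hvZ⟩ c ⟨_, hc, hxc⟩
    refine step v hvZ ⟨u, hu⟩ ⟨c, hc⟩ (hxu.symm.trans hxc) ?_
    rcases hF u v (fun h' => hu (Or.inl h')) (hZX hvZ) huv with h1 | h1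
    · exact absurd (Or.inr (hup v hvZ _ h1)) hu
    · exact h1
  refine ⟨main, le_trans ?_ hdepth⟩
  have h1 : (nbhd G (compIn G (X ∪ Z)ᶜ x) ∩ Z).ncard ≤ {u | F.anc u x}.ncard :=
    Set.ncard_le_ncard (fun v hv => main v hv x ⟨hx, hx, Reachable.refl _⟩) (Set.toFinite _)
  exact h1.trans (Finset.le_sup (f := fun v : V => {u | F.anc u v}.ncard) (Finset.mem_univ x))
end

section
/- Let F be a treedepth decomposition of a finite simple graph G, and let u and v be distinct vertices of G such that neither is an ancestor of the other in F. Then u and v are non-adjacent in G, and the set A of common ancestors of u and v in F is a (u,v)-vertex cut in G. -/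
open SimpleGraph Set

variable {V : Type*}

/-- if `F` is a treedepth decomposition of `G` and `u ≠ v` are such
that neither is an ancestor of the other in `F`, then `u` and `v` are non-adjacent
and the set of their common ancestors is a `(u,v)`-vertex cut in `G`. -/
theorem stmt3 {V : Type*} [Fintype V] (G : SimpleGraph V)
    (F : RootedForest V Set.univ) (hF : IsTDDecompOn G Set.univ F)
    (u v : V) (huv : u ≠ v) (h1 : ¬ F.anc u v) (h2 : ¬ F.anc v u) :
    ¬ G.Adj u v ∧ IsVertexCut G u v {w | F.anc w u ∧ F.anc w v} := by
  refine ⟨fun h => (hF u v trivial trivial h).elim h1 h2, fun h => h1 h.2, fun h => h2 h.1, ?_⟩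
  rintro ⟨p⟩
  have key : ∀ (x y : ↥({w | F.anc w u ∧ F.anc w v}ᶜ : Set V)),
      (G.induce ({w | F.anc w u ∧ F.anc w v}ᶜ : Set V)).Walk x y →
      (∃ a, F.anc a x.1 ∧ F.anc a u ∧ ¬ F.anc a v) →
      ∃ a, F.anc a y.1 ∧ F.anc a u ∧ ¬ F.anc a v := by
    intro x y q
    induction q with
    | nil => exact id
    | @cons w x z hadj q ih =>
      rintro ⟨a, haw, hau, hav⟩
      apply ih
      have hG : G.Adj w.1 x.1 := hadj
      rcases hF w.1 x.1 trivial trivial hG with h | h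
      · exact ⟨a, F.trans haw h, hau, hav⟩
      · rcases F.chain haw h with h' | h'
        · exact ⟨a, h', hau, hav⟩
        · have hxu := F.trans h' hau
          exact ⟨x.1, F.refl _ trivial, hxu, fun hxv => x.2 ⟨hxu, hxv⟩⟩
  obtain ⟨a, hav, -, hnav⟩ := key _ _ p ⟨u, F.refl u trivial, F.refl u trivial, h1⟩
  exact hnav hav
end

section
/- Let G be a finite simple graph, let η, k ∈ ℕ, let S ⊆ V(G) with |S| ≤ k, and let F be a treedepth decomposition of G − S of depth at most η. Let x, y ∈ V(G) ∖ S be distinct vertices such that either xy ∈ E(G), or every (x,y)-vertex cut in G has size at least k + η + 1. Then x is an ancestor of y in F or y is an ancestor of x in F. Consequently, if W ⊆ V(G) ∖ S is a set of vertices such that every pair of distinct vertices of W satisfies this condition, then all vertices of W lie on a single root-to-leaf path of F and |W| ≤ η. -/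
open SimpleGraph Set

variable {V : Type*}

/-- let `F` be a treedepth decomposition of `G − S` of depth at most `η`,
`|S| ≤ k`. If `x ≠ y` outside `S` are adjacent or every `(x,y)`-vertex cut has size at
least `k + η + 1`, then `x` and `y` are in ancestor-descendant relation in `F`.
Consequently, any set `W ⊆ V(G) ∖ S` all of whose pairs satisfy this condition lies on a
single root-to-leaf path of `F` (is pairwise ancestor-comparable) and has at most `η`
vertices. -/
theorem stmt4 {V : Type*} [Fintype V] (G : SimpleGraph V) (η k : ℕ)
    (S : Set V) (hSk : S.ncard ≤ k)
    (F : RootedForest V Sᶜ) (hF : IsTDDecompOn G Sᶜ F) (hdepth : F.depth ≤ η) :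
    (∀ x y, x ∈ Sᶜ → y ∈ Sᶜ → x ≠ y →
      (G.Adj x y ∨ ∀ A, IsVertexCut G x y A → k + η + 1 ≤ A.ncard) →
      F.anc x y ∨ F.anc y x) ∧
    (∀ W : Set V, W ⊆ Sᶜ →
      (∀ x ∈ W, ∀ y ∈ W, x ≠ y →
        (G.Adj x y ∨ ∀ A, IsVertexCut G x y A → k + η + 1 ≤ A.ncard)) →
      (∀ x ∈ W, ∀ y ∈ W, F.anc x y ∨ F.anc y x) ∧ W.ncard ≤ η) := by
  have hd : ∀ v, {u | F.anc u v}.ncard ≤ η := fun v =>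
    le_trans (Finset.le_sup (f := fun v : V => {u | F.anc u v}.ncard) (Finset.mem_univ v)) hdepth
  have main : ∀ x y, x ∈ Sᶜ → y ∈ Sᶜ → x ≠ y →
      (G.Adj x y ∨ ∀ A, IsVertexCut G x y A → k + η + 1 ≤ A.ncard) →
      F.anc x y ∨ F.anc y x := by
    intro x y hx hy hxy h
    rcases h with h | h
    · exact hF x y hx hy h
    by_contra hcon
    rw [not_or] at hcon
    obtain ⟨h1, h2⟩ := hcon
    have hcut : IsVertexCut G x y (S ∪ {u | F.anc u x ∧ F.anc u y}) := by
      have hxA : x ∈ (S ∪ {u | F.anc u x ∧ F.anc u y})ᶜ := by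
        rintro (h | h)
        · exact hx h
        · exact h1 h.2
      have hyA : y ∈ (S ∪ {u | F.anc u x ∧ F.anc u y})ᶜ := by
        rintro (h | h)
        · exact hy h
        · exact h2 h.1
      refine ⟨hxA, hyA, ?_⟩
      have key : ∀ a b : ↥((S ∪ {u | F.anc u x ∧ F.anc u y})ᶜ),
          (G.induce (S ∪ {u | F.anc u x ∧ F.anc u y})ᶜ).Walk a b →
          (∃ w, F.anc w x ∧ ¬ F.anc w y ∧ F.anc w a) →
          ∃ w, F.anc w x ∧ ¬ F.anc w y ∧ F.anc w b := by
        intro a b p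
        induction p with
        | nil => exact id
        | @cons u v w huv p ih =>
          rintro ⟨z, hz1, hz2, hz3⟩
          apply ih
          have hadj : G.Adj u.1 v.1 := huv
          have hu : u.1 ∈ Sᶜ := fun h => u.2 (Or.inl h)
          have hv : v.1 ∈ Sᶜ := fun h => v.2 (Or.inl h)
          rcases hF _ _ hu hv hadj with h | h
          · exact ⟨z, hz1, hz2, F.trans hz3 h⟩
          · rcases F.chain hz3 h with h' | h'
            · exact ⟨z, hz1, hz2, h'⟩
            · have hvx := F.trans h' hz1
              exact ⟨v.1, hvx, fun hvy => v.2 (Or.inr ⟨hvx, hvy⟩), F.refl _ hv⟩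
      rintro ⟨p⟩
      obtain ⟨w, _, hw2, hw3⟩ := key _ _ p ⟨x, F.refl x hx, h1, F.refl x hx⟩
      exact hw2 hw3
    have hc := h _ hcut
    have h3 := Set.ncard_union_le S {u | F.anc u x ∧ F.anc u y}
    have h4 : {u | F.anc u x ∧ F.anc u y}.ncard ≤ {u | F.anc u x}.ncard :=
      Set.ncard_le_ncard (fun u hu => hu.1) (Set.toFinite _)
    have h5 := hd x
    omega
  refine ⟨main, ?_⟩
  intro W hW hpair
  have hcomp : ∀ x ∈ W, ∀ y ∈ W, F.anc x y ∨ F.anc y x := by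
    intro x hx y hy
    by_cases hxy : x = y
    · subst hxy
      exact Or.inl (F.refl x (hW hx))
    · exact main x y (hW hx) (hW hy) hxy (hpair x hx y hy hxy)
  refine ⟨hcomp, ?_⟩
  rcases W.eq_empty_or_nonempty with rfl | hne
  · simp
  obtain ⟨m, hm, hmax⟩ :=
    Set.exists_max_image W (fun v => {u | F.anc u v}.ncard) (Set.toFinite _) hne
  refine le_trans (Set.ncard_le_ncard ?_ (Set.toFinite _)) (hd m)
  intro x hx
  rcases hcomp x hx m hm with h | h
  · exact h
  · have heq : {u | F.anc u m} = {u | F.anc u x} :=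
      Set.eq_of_subset_of_ncard_le (fun u hu => F.trans hu h) (hmax x hx) (Set.toFinite _)
    rw [heq]
    exact F.refl x (hW hx)
end

section
/- Let G be a finite simple graph, let η, d, k, ℓ ∈ ℕ with d ≥ 1, let X ⊆ V(G) and R ⊆ V(G) ∖ X. Let S be an η-treedepth deletion set of G with |S| ≤ k such that |(N_G(C) ∩ X) ∖ S| ≤ η for every connected component C of G[R]. Suppose C₁, …, C_ℓ are connected components of G[R] and H₀ ⊆ H₁ ⊆ ⋯ ⊆ H_ℓ are sets with H₀ = ∅ and H_i = H_{i−1} ∪ (N_G(C_i) ∩ X) for each i ∈ [ℓ], such that |(N_G(C_i) ∩ X) ∖ H_{i−1}| > d + η for every i ∈ [ℓ]. Then ℓ·d ≤ |S| (equivalently, ℓ ≤ |S|/d). -/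
open SimpleGraph Set

variable {V : Type*}

/-- if `S` is an `η`-treedepth deletion set of size at most `k` missing at
most `η` vertices of `N_G(C) ∩ X` for every component `C` of `G[R]`, and `H 0 = ∅`,
`H i = H (i-1) ∪ (N_G(C i) ∩ X)` with `|(N_G(C i) ∩ X) ∖ H (i-1)| > d + η` for
components `C 1, …, C ℓ` of `G[R]`, then `ℓ·d ≤ |S|`. -/
theorem stmt5 {V : Type*} [Fintype V] (G : SimpleGraph V) (η d k ℓ : ℕ) (hd : 1 ≤ d)
    (X R : Set V) (hRX : R ⊆ Xᶜ)
    (S : Set V) (hS : IsTDS G η S) (hSk : S.ncard ≤ k)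
    (hmiss : ∀ C, IsCompOf G R C → ((nbhd G C ∩ X) \ S).ncard ≤ η)
    (C : ℕ → Set V) (hC : ∀ i, 1 ≤ i → i ≤ ℓ → IsCompOf G R (C i))
    (H : ℕ → Set V) (hH0 : H 0 = ∅)
    (hHstep : ∀ i, 1 ≤ i → i ≤ ℓ → H i = H (i-1) ∪ (nbhd G (C i) ∩ X))
    (hbig : ∀ i, 1 ≤ i → i ≤ ℓ → d + η < ((nbhd G (C i) ∩ X) \ H (i-1)).ncard) :
    ℓ * d ≤ S.ncard := by
  have key : ∀ i, i ≤ ℓ → i * d ≤ (S ∩ H i).ncard := by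
    intro i
    induction i with
    | zero => intro _; simp
    | succ n ih =>
      intro hn
      have h1 := ih (by omega)
      have h2 := hHstep (n+1) (by omega) hn
      have h3 := hbig (n+1) (by omega) hn
      have h4 := hmiss _ (hC (n+1) (by omega) hn)
      simp only [Nat.add_sub_cancel] at h2 h3
      set N := nbhd G (C (n+1)) ∩ X with hN
      have h5 : (N \ H n).ncard ≤ (N \ S).ncard + (S ∩ (N \ H n)).ncard := by
        refine (Set.ncard_le_ncard ?_ (Set.toFinite _)).trans (Set.ncard_union_le _ _)
        intro x hx
        by_cases hxS : x ∈ S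
        · exact Or.inr ⟨hxS, hx⟩
        · exact Or.inl ⟨hx.1, hxS⟩
      have h6 : (S ∩ H (n+1)).ncard = (S ∩ H n).ncard + (S ∩ (N \ H n)).ncard := by
        rw [← Set.ncard_union_eq _ (Set.toFinite _) (Set.toFinite _)]
        · rw [h2, ← Set.inter_union_distrib_left, Set.union_sdiff_self]
        · rw [Set.disjoint_left]
          exact fun x hx hy => hy.2.2 hx.2
      rw [Nat.add_mul, h6]
      omega
  exact (key ℓ le_rfl).trans (Set.ncard_le_ncard Set.inter_subset_left (Set.toFinite _))
end

section
/- Let G be a finite connected simple graph with edge weights w : E(G) → ℕ, let R ⊆ V(G) be a set of terminals, let T be a Steiner tree for R in G, and let t ≥ 2 be an integer. Then there exists a t-restricted Steiner tree 𝒯 for R whose cost, i.e., the sum over all t-components in 𝒯 of their weights, is at most (1 + 1/⌊log₂ t⌋)·w(T). -/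
open SimpleGraph Set

variable {V : Type*}

section BorchersDu

/-- Subadditivity of weights. -/
lemma bd_weight_sup_le [Finite V] {G : SimpleGraph V} (w : Sym2 V → ℕ) (A B : G.Subgraph) :
    subWeight w (A ⊔ B) ≤ subWeight w A + subWeight w B := by
  unfold subWeight
  rw [Subgraph.edgeSet_sup, ← finsum_mem_union_inter (toFinite _) (toFinite _)]
  exact Nat.le_add_right _ _

lemma bd_weight_sup_eq [Finite V] {G : SimpleGraph V} (w : Sym2 V → ℕ) (A B : G.Subgraph)
    (h : Disjoint A.edgeSet B.edgeSet) :
    subWeight w (A ⊔ B) = subWeight w A + subWeight w B := by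
  unfold subWeight
  rw [Subgraph.edgeSet_sup, finsum_mem_union h (toFinite _) (toFinite _)]

lemma bd_weight_mono [Finite V] {G : SimpleGraph V} (w : Sym2 V → ℕ) {A B : G.Subgraph}
    (h : A ≤ B) : subWeight w A ≤ subWeight w B := by
  unfold subWeight
  have h1 : B.edgeSet = A.edgeSet ∪ (B.edgeSet \ A.edgeSet) := by
    rw [Set.union_sdiff_cancel (Subgraph.edgeSet_mono h)]
  rw [h1, finsum_mem_union disjoint_sdiff_right (toFinite _) (toFinite _)]
  exact Nat.le_add_right _ _

lemma bd_weight_edge {G : SimpleGraph V} (w : Sym2 V → ℕ) {v a : V} (h : G.Adj v a) :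
    subWeight w (G.subgraphOfAdj h) = w s(v, a) := by
  unfold subWeight
  rw [edgeSet_subgraphOfAdj, finsum_mem_singleton]

lemma bd_weight_single {G : SimpleGraph V} (w : Sym2 V → ℕ) (v : V) :
    subWeight w (G.singletonSubgraph v) = 0 := by
  unfold subWeight
  rw [edgeSet_singletonSubgraph, finsum_mem_empty]

lemma bd_conn_sup {G : SimpleGraph V} {A B : G.Subgraph} (hA : A.Connected) (hB : B.Connected)
    {v : V} (h1 : v ∈ A.verts) (h2 : v ∈ B.verts) : (A ⊔ B).Connected :=
  Subgraph.connected_sup hA.preconnected hB.preconnected ⟨v, h1, h2⟩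

lemma bd_leaf_iff {G : SimpleGraph V} (A : G.Subgraph) (x : V) :
    x ∈ subLeaves A ↔ ∃ y, A.Adj x y ∧ ∀ z, A.Adj x z → z = y := by
  unfold subLeaves
  rw [Set.mem_ofPred_eq, Set.ncard_eq_one]
  constructor
  · rintro ⟨y, hy⟩
    refine ⟨y, ?_, fun z hz => ?_⟩
    · have : y ∈ A.neighborSet x := by rw [hy]; rfl
      exact this
    · have : z ∈ A.neighborSet x := hz
      rw [hy] at this; exact this
  · rintro ⟨y, h1, h2⟩
    refine ⟨y, ?_⟩
    ext z
    exact ⟨fun hz => h2 z hz, fun hz => by rw [Set.mem_singleton_iff] at hz; subst hz; exact h1⟩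

lemma bd_leaf_sup {G : SimpleGraph V} {A B : G.Subgraph} {x : V} (h : x ∈ subLeaves (A ⊔ B)) :
    x ∈ subLeaves A ∨ x ∈ subLeaves B := by
  simp only [bd_leaf_iff, Subgraph.sup_adj] at *
  obtain ⟨y, h1 | h1, h2⟩ := h
  · exact Or.inl ⟨y, h1, fun z hz => h2 z (Or.inl hz)⟩
  · exact Or.inr ⟨y, h1, fun z hz => h2 z (Or.inr hz)⟩

/-- A finished component inside `T`. -/
def BDComp {G : SimpleGraph V} (R : Set V) (t : ℕ) (T B : G.Subgraph) : Prop :=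
  B ≤ T ∧ B.Connected ∧ (subLeaves B).ncard ≤ t ∧ subLeaves B ⊆ R

/-- A partial component inside `T`, attached to `v`, with at most `n` further leaves. -/
def BDPart {G : SimpleGraph V} (R : Set V) (n : ℕ) (T : G.Subgraph) (v : V) (C : G.Subgraph) :
    Prop :=
  C ≤ T ∧ C.Connected ∧ v ∈ C.verts ∧ ∃ A : Finset V, (A : Set V) ⊆ R ∧ A.card ≤ n ∧
    (v ∈ A ∨ ∃ u, C.Adj v u) ∧ ∀ x ∈ subLeaves C, x = v ∨ x ∈ A

/-- A partial solution for `T` rooted at `v`. -/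
def BDState {G : SimpleGraph V} (w : Sym2 V → ℕ) (R : Set V) (t n : ℕ) (T : G.Subgraph) (v : V)
    (C : G.Subgraph) (L : Multiset G.Subgraph) (s : ℕ) : Prop :=
  BDPart R n T v C ∧ (∀ B ∈ L, BDComp R t T B) ∧ (C ⊔ L.sup).Connected ∧
    R ∩ T.verts ⊆ (C ⊔ L.sup).verts ∧ subWeight w C + (L.map (subWeight w)).sum ≤ s

/-- `T` rooted at `v` has a balanced family of partial solutions. -/
def BDGood {G : SimpleGraph V} (w : Sym2 V → ℕ) (R : Set V) (t k : ℕ) (T : G.Subgraph) (v : V) :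
    Prop :=
  ∃ (C : ℕ → G.Subgraph) (L : ℕ → Multiset G.Subgraph) (S : ℕ → ℕ) (q : G.Subgraph) (P : ℕ),
    (∀ j ≤ k, BDState w R t (2 ^ j) T v (C j) (L j) (S j)) ∧ BDPart R 1 T v q ∧
    S 0 ≤ S k + P ∧ ∑ j ∈ Finset.range k, S (j + 1) + P + subWeight w q ≤ (k + 1) * subWeight w T

/-- `T` has a full solution. -/
def BDSolved {G : SimpleGraph V} (w : Sym2 V → ℕ) (R : Set V) (t k : ℕ) (T : G.Subgraph) :
    Prop :=
  ∃ L : Multiset G.Subgraph, (∀ B ∈ L, BDComp R t T B) ∧ L.sup.Connected ∧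
    R ∩ T.verts ⊆ L.sup.verts ∧ k * (L.map (subWeight w)).sum ≤ (k + 1) * subWeight w T

lemma BDComp.mono {G : SimpleGraph V} {R : Set V} {t : ℕ} {T T' B : G.Subgraph}
    (h : BDComp R t T B) (hT : T ≤ T') : BDComp R t T' B :=
  ⟨h.1.trans hT, h.2⟩

lemma BDPart.mono {G : SimpleGraph V} {R : Set V} {n : ℕ} {T T' C : G.Subgraph} {v : V}
    (h : BDPart R n T v C) (hT : T ≤ T') : BDPart R n T' v C :=
  ⟨h.1.trans hT, h.2⟩

lemma BDState.mono {G : SimpleGraph V} {w : Sym2 V → ℕ} {R : Set V} {t n s : ℕ}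
    {T T' C : G.Subgraph} {v : V} {L : Multiset G.Subgraph}
    (h : BDState w R t n T v C L s) (hT : T ≤ T') (hR : R ∩ T'.verts ⊆ T.verts) :
    BDState w R t n T' v C L s := by
  obtain ⟨h1, h2, h3, h4, h5⟩ := h
  exact ⟨h1.mono hT, fun B hB => (h2 B hB).mono hT, h3,
    fun x hx => h4 ⟨hx.1, hR hx⟩, h5⟩

lemma BDGood.mono [Finite V] {G : SimpleGraph V} {w : Sym2 V → ℕ} {R : Set V} {t k : ℕ}
    {T T' : G.Subgraph} {v : V}
    (h : BDGood w R t k T v) (hT : T ≤ T') (hR : R ∩ T'.verts ⊆ T.verts) :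
    BDGood w R t k T' v := by
  obtain ⟨C, L, S, q, P, h1, h2, h3, h4⟩ := h
  exact ⟨C, L, S, q, P, fun j hj => (h1 j hj).mono hT hR, h2.mono hT, h3,
    h4.trans (Nat.mul_le_mul_left _ (bd_weight_mono w hT))⟩

lemma BDPart.ext {G : SimpleGraph V} {R : Set V} {n : ℕ} {T C : G.Subgraph} {a v : V}
    (h : BDPart R n T a C) (hv : v ∉ T.verts) (hva : G.Adj v a) :
    BDPart R n (T ⊔ G.subgraphOfAdj hva) v (C ⊔ G.subgraphOfAdj hva) := by
  obtain ⟨h1, h2, h3, A, hA, hn, ha, hl⟩ := h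
  have hvC : v ∉ C.verts := fun h => hv (h1.1 h)
  refine ⟨sup_le_sup_right h1 _, bd_conn_sup (v := a) h2 (Subgraph.subgraphOfAdj_connected hva) h3 (by simp),
    by simp, A, hA, hn, Or.inr ⟨a, by simp⟩, ?_⟩
  intro x hx
  by_cases hxv : x = v
  · exact Or.inl hxv
  right
  rw [bd_leaf_iff] at hx
  obtain ⟨y, hy, hyu⟩ := hx
  by_cases hxa : x = a
  · subst hxa
    rcases ha with ha | ⟨u, hu⟩
    · exact ha
    · exfalso
      have e1 := hyu u (Or.inl hu)
      have e2 := hyu v (Or.inr (by simp))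
      exact hvC (by rw [e2, ← e1]; exact hu.snd_mem)
  · have key : ∀ z, (C ⊔ G.subgraphOfAdj hva).Adj x z ↔ C.Adj x z := by
      intro z
      simp only [Subgraph.sup_adj, subgraphOfAdj_adj, Sym2.eq_iff, or_iff_left_iff_imp]
      rintro (⟨e, -⟩ | ⟨-, e⟩)
      · exact absurd e.symm hxv
      · exact absurd e.symm hxa
    have := hl x ((bd_leaf_iff C x).2 ⟨y, (key y).1 hy, fun z hz => hyu z ((key z).2 hz)⟩)
    exact this.resolve_left hxa

lemma BDPart.merge {G : SimpleGraph V} {R : Set V} {n m : ℕ} {T₁ T₂ C₁ C₂ : G.Subgraph} {v : V}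
    (h : BDPart R n T₁ v C₁) (h' : BDPart R m T₂ v C₂) :
    BDPart R (n + m) (T₁ ⊔ T₂) v (C₁ ⊔ C₂) := by
  classical
  obtain ⟨h1, h2, h3, A, hA, hn, ha, hl⟩ := h
  obtain ⟨h1', h2', h3', A', hA', hn', ha', hl'⟩ := h'
  refine ⟨sup_le_sup h1 h1', bd_conn_sup h2 h2' h3 h3', Or.inl h3, A ∪ A', ?_,
    (Finset.card_union_le _ _).trans (Nat.add_le_add hn hn'), ?_, ?_⟩
  · rw [Finset.coe_union]; exact Set.union_subset hA hA'
  · rcases ha with ha | ⟨u, hu⟩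
    · exact Or.inl (Finset.mem_union_left _ ha)
    · exact Or.inr ⟨u, Or.inl hu⟩
  · intro x hx
    rw [Finset.mem_union]
    rcases bd_leaf_sup hx with hx | hx
    · rcases hl x hx with h | h
      · exact Or.inl h
      · exact Or.inr (Or.inl h)
    · rcases hl' x hx with h | h
      · exact Or.inl h
      · exact Or.inr (Or.inr h)

/-- Closing a partial component at a non-terminal branching vertex. -/
lemma BDPart.close {G : SimpleGraph V} {R : Set V} {n m t : ℕ} {T₁ T₂ C₁ C₂ : G.Subgraph} {v : V}
    (h : BDPart R n T₁ v C₁) (h' : BDPart R m T₂ v C₂) (hv : v ∉ R)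
    (hd : T₁.verts ∩ T₂.verts ⊆ {v}) (ht : n + m ≤ t) :
    BDComp R t (T₁ ⊔ T₂) (C₁ ⊔ C₂) := by
  have hm := h.merge h'
  obtain ⟨g1, g2, g3, B, hB, hBn, -, hBl⟩ := hm
  obtain ⟨h1, h2, h3, A, hA, hn, ha, hl⟩ := h
  obtain ⟨h1', h2', h3', A', hA', hn', ha', hl'⟩ := h'
  obtain ⟨u, hu⟩ := ha.resolve_left (fun h => hv (hA h))
  obtain ⟨u', hu'⟩ := ha'.resolve_left (fun h => hv (hA' h))
  have hsub : subLeaves (C₁ ⊔ C₂) ⊆ (B : Set V) := by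
    intro x hx
    rcases hBl x hx with e | e
    · exfalso
      subst e
      rw [bd_leaf_iff] at hx
      obtain ⟨y, hy, hyu⟩ := hx
      have e1 := hyu u (Or.inl hu)
      have e2 := hyu u' (Or.inr hu')
      have e3 : u = u' := e1.trans e2.symm
      have : u ∈ T₁.verts ∩ T₂.verts := ⟨h1.1 hu.snd_mem, e3 ▸ h1'.1 hu'.snd_mem⟩
      have := hd this
      rw [Set.mem_singleton_iff] at this
      exact hu.ne this.symm
    · exact e
  refine ⟨g1, g2, ?_, hsub.trans hB⟩
  calc (subLeaves (C₁ ⊔ C₂)).ncard ≤ (B : Set V).ncard := Set.ncard_le_ncard hsub (Finset.finite_toSet B)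
    _ = B.card := Set.ncard_coe_finset B
    _ ≤ t := hBn.trans ht

/-- A partial component at a terminal is a component. -/
lemma BDPart.comp {G : SimpleGraph V} {R : Set V} {n t : ℕ} {T C : G.Subgraph} {v : V}
    (h : BDPart R n T v C) (hv : v ∈ R) (ht : n + 1 ≤ t) : BDComp R t T C := by
  classical
  obtain ⟨h1, h2, h3, A, hA, hn, ha, hl⟩ := h
  have hsub : subLeaves C ⊆ (insert v A : Finset V) := by
    intro x hx
    rw [Finset.mem_coe, Finset.mem_insert]
    exact hl x hx
  refine ⟨h1, h2, ?_, fun x hx => ?_⟩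
  · calc (subLeaves C).ncard ≤ ((insert v A : Finset V) : Set V).ncard :=
          Set.ncard_le_ncard hsub (Finset.finite_toSet _)
      _ = (insert v A : Finset V).card := Set.ncard_coe_finset _
      _ ≤ t := (Finset.card_insert_le _ _).trans (by omega)
  · rcases hl x hx with e | e
    · exact e ▸ hv
    · exact hA e

lemma BDState.ext [Finite V] {G : SimpleGraph V} {w : Sym2 V → ℕ} {R : Set V} {t n s : ℕ}
    {T C : G.Subgraph} {a v : V} {L : Multiset G.Subgraph}
    (h : BDState w R t n T a C L s) (hv : v ∉ T.verts) (hva : G.Adj v a) :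
    BDState w R t n (T ⊔ G.subgraphOfAdj hva) v (C ⊔ G.subgraphOfAdj hva) L (s + w s(v, a)) := by
  obtain ⟨h1, h2, h3, h4, h5⟩ := h
  have e : C ⊔ G.subgraphOfAdj hva ⊔ L.sup = (C ⊔ L.sup) ⊔ G.subgraphOfAdj hva :=
    sup_right_comm _ _ _
  refine ⟨h1.ext hv hva, fun B hB => (h2 B hB).mono le_sup_left, ?_, ?_, ?_⟩
  · rw [e]
    exact bd_conn_sup (v := a) h3 (Subgraph.subgraphOfAdj_connected hva) (Or.inl h1.2.2.1) (by simp)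
  · rw [e]
    rintro x ⟨hx, hx' | hx'⟩
    · exact Or.inl (h4 ⟨hx, hx'⟩)
    · exact Or.inr hx'
  · have := bd_weight_sup_le w C (G.subgraphOfAdj hva)
    rw [bd_weight_edge] at this
    omega

lemma BDState.merge [Finite V] {G : SimpleGraph V} {w : Sym2 V → ℕ} {R : Set V} {t n m s s' : ℕ}
    {T₁ T₂ C₁ C₂ : G.Subgraph} {v : V} {L₁ L₂ : Multiset G.Subgraph}
    (h : BDState w R t n T₁ v C₁ L₁ s) (h' : BDState w R t m T₂ v C₂ L₂ s') :
    BDState w R t (n + m) (T₁ ⊔ T₂) v (C₁ ⊔ C₂) (L₁ + L₂) (s + s') := by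
  obtain ⟨h1, h2, h3, h4, h5⟩ := h
  obtain ⟨h1', h2', h3', h4', h5'⟩ := h'
  have e : C₁ ⊔ C₂ ⊔ (L₁ + L₂).sup = (C₁ ⊔ L₁.sup) ⊔ (C₂ ⊔ L₂.sup) := by
    rw [Multiset.sup_add]
    exact sup_sup_sup_comm _ _ _ _
  refine ⟨h1.merge h1', fun B hB => ?_, ?_, ?_, ?_⟩
  · rcases Multiset.mem_add.1 hB with hB | hB
    · exact (h2 B hB).mono le_sup_left
    · exact (h2' B hB).mono le_sup_right
  · rw [e]
    exact bd_conn_sup (v := v) h3 h3' (Or.inl h1.2.2.1) (Or.inl h1'.2.2.1)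
  · rw [e]
    rintro x ⟨hx, hx' | hx'⟩
    · exact Or.inl (h4 ⟨hx, hx'⟩)
    · exact Or.inr (h4' ⟨hx, hx'⟩)
  · have := bd_weight_sup_le w C₁ C₂
    rw [Multiset.map_add, Multiset.sum_add]
    omega

lemma BDGood.ext [Finite V] {G : SimpleGraph V} {w : Sym2 V → ℕ} {R : Set V} {t k : ℕ}
    {T : G.Subgraph} {a v : V}
    (h : BDGood w R t k T a) (hv : v ∉ T.verts) (hva : G.Adj v a) :
    BDGood w R t k (T ⊔ G.subgraphOfAdj hva) v := by
  obtain ⟨C, L, S, q, P, h1, h2, h3, h4⟩ := h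
  refine ⟨fun j => C j ⊔ G.subgraphOfAdj hva, L, fun j => S j + w s(v, a),
    q ⊔ G.subgraphOfAdj hva, P, fun j hj => (h1 j hj).ext hv hva, h2.ext hv hva, ?_, ?_⟩
  · simp only; omega
  · have hq := bd_weight_sup_le w q (G.subgraphOfAdj hva)
    have hT : subWeight w (T ⊔ G.subgraphOfAdj hva) = subWeight w T + w s(v, a) := by
      rw [bd_weight_sup_eq, bd_weight_edge]
      rw [edgeSet_subgraphOfAdj, Set.disjoint_singleton_right]
      intro h
      exact hv (Subgraph.mem_edgeSet.1 h).fst_mem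
    rw [bd_weight_edge] at hq
    rw [hT, Finset.sum_add_distrib, Finset.sum_const, Finset.card_range, smul_eq_mul]
    nlinarith

lemma BDGood.merge [Finite V] {G : SimpleGraph V} {w : Sym2 V → ℕ} {R : Set V} {t k : ℕ}
    {T₁ T₂ : G.Subgraph} {v : V} (hk : 1 ≤ k) (hkt : 2 ^ k ≤ t)
    (h : BDGood w R t k T₁ v) (h' : BDGood w R t k T₂ v) (hv : v ∉ R)
    (hd : T₁.verts ∩ T₂.verts ⊆ {v}) :
    BDGood w R t k (T₁ ⊔ T₂) v := by
  obtain ⟨C, L, S, q, P, h1, h2, h3, h4⟩ := h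
  obtain ⟨C', L', S', q', P', h1', h2', h3', h4'⟩ := h'
  obtain ⟨l, rfl⟩ : ∃ l, k = l + 1 := ⟨k - 1, by omega⟩
  have hstep : ∀ j, j + 1 ≤ l + 1 →
      BDState w R t (2 ^ (j + 1)) (T₁ ⊔ T₂) v (C j ⊔ C' j) (L j + L' j) (S j + S' j) := by
    intro j hj
    have := (h1 j (by omega)).merge (h1' j (by omega))
    rwa [← two_mul, ← pow_succ'] at this
  have hclose : BDComp R t (T₁ ⊔ T₂) (C l ⊔ C' l) := by
    refine (h1 l (by omega)).1.close (h1' l (by omega)).1 hv hd ?_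
    rw [← two_mul, ← pow_succ']; exact hkt
  refine ⟨fun j => Nat.casesOn j q' (fun j => C j ⊔ C' j),
    fun j => Nat.casesOn j ((C l ⊔ C' l) ::ₘ (L l + L' l)) (fun j => L j + L' j),
    fun j => Nat.casesOn j (S l + S' l + subWeight w q') (fun j => S j + S' j),
    q, subWeight w q', ?_, h2.mono le_sup_left, le_rfl, ?_⟩
  · intro j hj
    rcases j with _ | j
    · change BDState w R t (2 ^ 0) (T₁ ⊔ T₂) v q' ((C l ⊔ C' l) ::ₘ (L l + L' l))
        (S l + S' l + subWeight w q')
      have hl := hstep l le_rfl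
      obtain ⟨g1, g2, g3, g4, g5⟩ := hl
      have e : q' ⊔ ((C l ⊔ C' l) ::ₘ (L l + L' l)).sup = q' ⊔ (C l ⊔ C' l ⊔ (L l + L' l).sup) := by
        rw [Multiset.sup_cons]
      refine ⟨by simpa using h2'.mono le_sup_right, ?_, ?_, ?_, ?_⟩
      · intro B hB
        rcases Multiset.mem_cons.1 hB with rfl | hB
        · exact hclose
        · exact g2 B hB
      · rw [e]
        exact bd_conn_sup (v := v) h2'.2.1 g3 h2'.2.2.1 (Or.inl g1.2.2.1)
      · rw [e]
        exact fun x hx => Or.inr (g4 hx)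
      · rw [Multiset.map_cons, Multiset.sum_cons]
        omega
    · exact hstep j hj
  · have hT : subWeight w (T₁ ⊔ T₂) = subWeight w T₁ + subWeight w T₂ := by
      apply bd_weight_sup_eq
      rw [Set.disjoint_left]
      intro e
      induction e using Sym2.ind with
      | _ x y =>
        intro e1 e2
        rw [Subgraph.mem_edgeSet] at e1 e2
        have hx := hd ⟨e1.fst_mem, e2.fst_mem⟩
        have hy := hd ⟨e1.snd_mem, e2.snd_mem⟩
        exact e1.ne (hx.trans hy.symm)
    have s1 := (Finset.sum_range_succ S (l + 1)).symm.trans (Finset.sum_range_succ' S (l + 1))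
    have s2 := (Finset.sum_range_succ S' (l + 1)).symm.trans (Finset.sum_range_succ' S' (l + 1))
    simp only
    rw [hT, Finset.sum_add_distrib, mul_add]
    omega

lemma BDGood.solved {G : SimpleGraph V} {w : Sym2 V → ℕ} {R : Set V} {t k : ℕ}
    {T : G.Subgraph} {v : V} (hk : 1 ≤ k) (hkt : 2 ^ k ≤ t)
    (h : BDGood w R t k T v) (hv : v ∈ R) : BDSolved w R t k T := by
  obtain ⟨C, L, S, q, P, h1, h2, h3, h4⟩ := h
  have s1 := (Finset.sum_range_succ S k).symm.trans (Finset.sum_range_succ' S k)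
  have hsum : ∑ j ∈ Finset.range k, S j ≤ (k + 1) * subWeight w T := by omega
  obtain ⟨j, hj, hjS⟩ : ∃ j ∈ Finset.range k, k * S j ≤ (k + 1) * subWeight w T := by
    by_contra! hcon
    have hne : (Finset.range k).Nonempty := ⟨0, Finset.mem_range.2 hk⟩
    have h5 := Finset.sum_lt_sum_of_nonempty hne hcon
    rw [Finset.sum_const, Finset.card_range, smul_eq_mul, ← Finset.mul_sum] at h5
    exact absurd (Nat.mul_le_mul_left k hsum) (not_le.2 h5)
  rw [Finset.mem_range] at hj
  obtain ⟨g1, g2, g3, g4, g5⟩ := h1 j hj.le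
  have hpow : 2 ^ j + 1 ≤ t := by
    have a1 : 2 ^ (j + 1) ≤ 2 ^ k := Nat.pow_le_pow_right (by norm_num) hj
    have a2 : 1 ≤ 2 ^ j := Nat.one_le_two_pow
    rw [pow_succ] at a1
    omega
  refine ⟨C j ::ₘ L j, ?_, ?_, ?_, ?_⟩
  · intro B hB
    rcases Multiset.mem_cons.1 hB with rfl | hB
    · exact g1.comp hv hpow
    · exact g2 B hB
  · rw [Multiset.sup_cons]; exact g3
  · rw [Multiset.sup_cons]; exact g4
  · rw [Multiset.map_cons, Multiset.sum_cons]
    exact (Nat.mul_le_mul_left k g5).trans hjS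

lemma BDSolved.good {G : SimpleGraph V} {w : Sym2 V → ℕ} {R : Set V} {t k : ℕ}
    {T : G.Subgraph} {v : V} (h : BDSolved w R t k T) (hv : v ∈ R) (hvT : v ∈ T.verts) :
    BDGood w R t k T v := by
  obtain ⟨L, h1, h2, h3, h4⟩ := h
  have hle : G.singletonSubgraph v ≤ T := (singletonSubgraph_le_iff v T).2 hvT
  have hp : ∀ n, 1 ≤ n → BDPart R n T v (G.singletonSubgraph v) := by
    intro n hn
    refine ⟨hle, Subgraph.singletonSubgraph_connected, by simp, {v}, by simpa using hv,
      by simpa using hn, Or.inl (by simp), ?_⟩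
    intro x hx
    rw [bd_leaf_iff] at hx
    obtain ⟨y, hy, -⟩ := hx
    exact absurd hy (by simp)
  refine ⟨fun _ => G.singletonSubgraph v, fun _ => L, fun _ => (L.map (subWeight w)).sum,
    G.singletonSubgraph v, 0, fun j _ => ⟨hp _ Nat.one_le_two_pow, h1, ?_, ?_, ?_⟩,
    hp 1 le_rfl, by simp, ?_⟩
  · exact bd_conn_sup (v := v) Subgraph.singletonSubgraph_connected h2 (by simp) (h3 ⟨hv, hvT⟩)
  · exact fun x hx => Or.inr (h3 hx)
  · rw [bd_weight_single, zero_add]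
  · rw [bd_weight_single, Finset.sum_const, Finset.card_range, smul_eq_mul]
    simpa using h4

lemma BDSolved.merge [Finite V] {G : SimpleGraph V} {w : Sym2 V → ℕ} {R : Set V} {t k : ℕ}
    {T₁ T₂ : G.Subgraph} {v : V} (h : BDSolved w R t k T₁) (h' : BDSolved w R t k T₂)
    (hv : v ∈ R) (hv1 : v ∈ T₁.verts) (hv2 : v ∈ T₂.verts)
    (hd : T₁.verts ∩ T₂.verts ⊆ {v}) : BDSolved w R t k (T₁ ⊔ T₂) := by
  obtain ⟨L, h1, h2, h3, h4⟩ := h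
  obtain ⟨L', h1', h2', h3', h4'⟩ := h'
  refine ⟨L + L', fun B hB => ?_, ?_, ?_, ?_⟩
  · rcases Multiset.mem_add.1 hB with hB | hB
    · exact (h1 B hB).mono le_sup_left
    · exact (h1' B hB).mono le_sup_right
  · rw [Multiset.sup_add]
    exact bd_conn_sup h2 h2' (h3 ⟨hv, hv1⟩) (h3' ⟨hv, hv2⟩)
  · rw [Multiset.sup_add]
    rintro x ⟨hx, hx' | hx'⟩
    · exact Or.inl (h3 ⟨hx, hx'⟩)
    · exact Or.inr (h3' ⟨hx, hx'⟩)
  · have hT : subWeight w (T₁ ⊔ T₂) = subWeight w T₁ + subWeight w T₂ := by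
      apply bd_weight_sup_eq
      rw [Set.disjoint_left]
      intro e
      induction e using Sym2.ind with
      | _ x y =>
        intro e1 e2
        rw [Subgraph.mem_edgeSet] at e1 e2
        have hx := hd ⟨e1.fst_mem, e2.fst_mem⟩
        have hy := hd ⟨e1.snd_mem, e2.snd_mem⟩
        exact e1.ne (hx.trans hy.symm)
    rw [hT, Multiset.map_add, Multiset.sum_add, mul_add, mul_add]
    omega

/-- Rooted trees inside `G`, built recursively. -/
inductive BDRooted (G : SimpleGraph V) : G.Subgraph → V → Prop
  | single (v : V) : BDRooted G (G.singletonSubgraph v) v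
  | join {T₁ T₂ : G.Subgraph} {v a : V} (h1 : BDRooted G T₁ v) (h2 : BDRooted G T₂ a)
      (hva : G.Adj v a) (hd : Disjoint T₁.verts T₂.verts) :
      BDRooted G (T₁ ⊔ (T₂ ⊔ G.subgraphOfAdj hva)) v

lemma BDRooted.mem {G : SimpleGraph V} {T : G.Subgraph} {v : V} (h : BDRooted G T v) :
    v ∈ T.verts := by
  induction h with
  | single v => simp
  | join _ _ _ _ ih1 _ => exact Or.inl ih1

lemma BDRooted.grow {G : SimpleGraph V} {T : G.Subgraph} {v : V} (h : BDRooted G T v) :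
    ∀ {u x : V} (_ : u ∈ T.verts) (_ : x ∉ T.verts) (hux : G.Adj u x),
      BDRooted G (T ⊔ (G.singletonSubgraph x ⊔ G.subgraphOfAdj hux)) v := by
  induction h with
  | single v =>
    intro u x hu hx hux
    obtain rfl : u = v := by simpa using hu
    refine BDRooted.join (BDRooted.single u) (BDRooted.single x) hux ?_
    simpa using fun h => hux.ne h
  | @join T₁ T₂ v a h1 h2 hva hd ih1 ih2 =>
    intro u x hu hx hux
    have hx1 : x ∉ T₁.verts := fun h => hx (Or.inl h)
    have hx2 : x ∉ T₂.verts := fun h => hx (Or.inr (Or.inl h))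
    have hu' : u ∈ T₁.verts ∨ u ∈ T₂.verts := by
      rcases hu with hu | hu | hu
      · exact Or.inl hu
      · exact Or.inr hu
      · rcases (by simpa using hu : u = v ∨ u = a) with rfl | rfl
        · exact Or.inl h1.mem
        · exact Or.inr h2.mem
    rcases hu' with hu' | hu'
    · have h3 : Disjoint (T₁ ⊔ (G.singletonSubgraph x ⊔ G.subgraphOfAdj hux)).verts T₂.verts := by
        rw [Set.disjoint_left]
        rintro y (hy | hy | hy) hy2
        · exact Set.disjoint_left.1 hd hy hy2
        · obtain rfl : y = x := by simpa using hy
          exact hx2 hy2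
        · rcases (by simpa using hy : y = u ∨ y = x) with rfl | rfl
          · exact Set.disjoint_left.1 hd hu' hy2
          · exact hx2 hy2
      have := BDRooted.join (ih1 hu' hx1 hux) h2 hva h3
      rwa [sup_right_comm] at this
    · have h3 : Disjoint T₁.verts (T₂ ⊔ (G.singletonSubgraph x ⊔ G.subgraphOfAdj hux)).verts := by
        rw [Set.disjoint_left]
        rintro y hy2 (hy | hy | hy)
        · exact Set.disjoint_left.1 hd hy2 hy
        · obtain rfl : y = x := by simpa using hy
          exact hx1 hy2
        · rcases (by simpa using hy : y = u ∨ y = x) with rfl | rfl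
          · exact Set.disjoint_left.1 hd hy2 hu'
          · exact hx1 hy2
      have := BDRooted.join h1 (ih2 hu' hx2 hux) hva h3
      rwa [sup_right_comm, ← sup_assoc T₁] at this

/-- The heart of the argument. -/
lemma BDRooted.good [Finite V] {G : SimpleGraph V} {w : Sym2 V → ℕ} {R : Set V} {t k : ℕ}
    (hk : 1 ≤ k) (hkt : 2 ^ k ≤ t) {T : G.Subgraph} {v : V} (h : BDRooted G T v) :
    R ∩ T.verts = ∅ ∨ BDGood w R t k T v := by
  induction h with
  | single v =>
    by_cases hv : v ∈ R
    · right
      refine BDSolved.good ⟨{G.singletonSubgraph v}, ?_, ?_, ?_, ?_⟩ hv (by simp)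
      · intro B hB
        obtain rfl := Multiset.mem_singleton.1 hB
        have hl : subLeaves (G.singletonSubgraph v) = ∅ := by
          ext x
          simp [bd_leaf_iff]
        refine ⟨le_rfl, Subgraph.singletonSubgraph_connected, ?_, ?_⟩ <;> simp [hl]
      · simpa using Subgraph.singletonSubgraph_connected
      · simp
      · simp [bd_weight_single]
    · left
      ext x
      simp only [singletonSubgraph_verts, Set.mem_inter_iff, Set.mem_singleton_iff,
        Set.mem_empty_iff_false, iff_false, not_and]
      rintro hx rfl
      exact hv hx
  | @join T₁ T₂ v a h1 h2 hva hd ih1 ih2 =>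
    have hv1 := h1.mem
    have hv2 : v ∉ T₂.verts := Set.disjoint_left.1 hd hv1
    set T₃ := T₂ ⊔ G.subgraphOfAdj hva with hT₃
    have hv3 : v ∈ T₃.verts := Or.inr (by simp)
    have hverts : ∀ x ∈ T₃.verts, x = v ∨ x ∈ T₂.verts := by
      rintro x (hx | hx)
      · exact Or.inr hx
      · rcases (by simpa using hx : x = v ∨ x = a) with rfl | rfl
        · exact Or.inl rfl
        · exact Or.inr h2.mem
    have hd3 : T₁.verts ∩ T₃.verts ⊆ {v} := by
      rintro x ⟨hx1, hx3⟩
      rcases hverts x hx3 with h | h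
      · exact h
      · exact absurd h (Set.disjoint_left.1 hd hx1)
    have h3 : R ∩ T₂.verts = ∅ ∨ BDGood w R t k T₃ v := by
      rcases ih2 with h | h
      · exact Or.inl h
      · exact Or.inr (h.ext hv2 hva)
    rcases h3 with h3 | h3
    · have hR : R ∩ (T₁ ⊔ T₃).verts ⊆ T₁.verts := by
        rintro x ⟨hx, hx1 | hx3⟩
        · exact hx1
        · rcases hverts x hx3 with rfl | h
          · exact hv1
          · exact absurd (show x ∈ R ∩ T₂.verts from ⟨hx, h⟩) (by rw [h3]; exact id)
      rcases ih1 with h | h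
      · left
        rw [Set.eq_empty_iff_forall_notMem] at h ⊢
        exact fun x hx => h x ⟨hx.1, hR hx⟩
      · exact Or.inr (h.mono le_sup_left hR)
    · rcases ih1 with h | h
      · right
        refine h3.mono le_sup_right ?_
        rintro x ⟨hx, hx1 | hx3⟩
        · exact absurd (show x ∈ R ∩ T₁.verts from ⟨hx, hx1⟩) (by rw [h]; exact id)
        · exact hx3
      · right
        by_cases hv : v ∈ R
        · exact ((h.solved hk hkt hv).merge (h3.solved hk hkt hv) hv hv1 hv3 hd3).good hv
            (Or.inl hv1)
        · exact h.merge hk hkt h3 hv hd3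

lemma bd_exists_rooted [Finite V] {G : SimpleGraph V} {T : G.Subgraph} (hT : T.Connected) {v : V}
    (hv : v ∈ T.verts) : ∃ T' : G.Subgraph, T' ≤ T ∧ T'.verts = T.verts ∧ BDRooted G T' v := by
  have hne : {T' : G.Subgraph | T' ≤ T ∧ BDRooted G T' v}.Nonempty :=
    ⟨_, (singletonSubgraph_le_iff v T).2 hv, BDRooted.single v⟩
  obtain ⟨M, hM⟩ := (Set.toFinite {T' : G.Subgraph | T' ≤ T ∧ BDRooted G T' v}).exists_maximal hne
  refine ⟨M, hM.1.1, ?_, hM.1.2⟩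
  by_contra hcon
  have hsub : M.verts ⊆ T.verts := hM.1.1.1
  obtain ⟨x, hxT, hxM⟩ : ∃ x ∈ T.verts, x ∉ M.verts := by
    by_contra! h
    exact hcon (hsub.antisymm h)
  obtain ⟨p⟩ := hT.coe.preconnected ⟨v, hv⟩ ⟨x, hxT⟩
  obtain ⟨⟨⟨y, z⟩, hyz⟩, -, hy, hz⟩ :=
    p.exists_boundary_dart {u : T.verts | (u : V) ∈ M.verts} hM.1.2.mem hxM
  have hyz' : T.Adj y z := hyz
  have hle : M ⊔ (G.singletonSubgraph (z : V) ⊔ G.subgraphOfAdj hyz'.adj_sub) ≤ T :=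
    sup_le hM.1.1 (sup_le ((singletonSubgraph_le_iff _ T).2 z.2)
      (subgraphOfAdj_le_of_adj T hyz'))
  have := hM.2 ⟨hle, hM.1.2.grow hy hz hyz'.adj_sub⟩ le_sup_left
  exact hz (this.1 (Or.inr (Or.inl (by simp))))

lemma bd_isTree {G : SimpleGraph V} {T B : G.Subgraph} (hT : T.coe.IsTree) (hB : B.Connected)
    (h : B ≤ T) : B.coe.IsTree :=
  ⟨hB.coe, hT.isAcyclic.comap (Subgraph.inclusion h) (Subgraph.inclusion.injective h)⟩

end BorchersDu

/-- Borchers–Du: for every Steiner tree `T` for the terminal set `R` in a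
connected graph `G` with edge weights `w` and every `t ≥ 2`, there is a `t`-restricted
Steiner tree for `R` — a collection (with multiplicity) of `t`-components for `R` whose
union is a Steiner tree for `R` — of total cost at most `(1 + 1/⌊log₂ t⌋)·w(T)`. -/
theorem stmt11 {V : Type*} [Fintype V] (G : SimpleGraph V) (hconn : G.Connected)
    (w : Sym2 V → ℕ) (R : Set V) (T : G.Subgraph) (hT : IsSteinerTree G R T)
    (t : ℕ) (ht : 2 ≤ t) :
    ∃ 𝒯 : Multiset G.Subgraph,
      (∀ B ∈ 𝒯, IsTComponent G R t B) ∧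
      IsSteinerTree G R 𝒯.sup ∧
      ((𝒯.map (subWeight w)).sum : ℝ) ≤
        (1 + 1 / (Nat.log 2 t : ℝ)) * (subWeight w T : ℝ) := by
  obtain ⟨hTree, hRT⟩ := hT
  have hTc : T.Connected := ⟨hTree.connected⟩
  rcases R.eq_empty_or_nonempty with rfl | ⟨r, hr⟩
  · obtain ⟨⟨v, hv⟩⟩ := hTree.connected.nonempty
    have hst : (G.singletonSubgraph v).coe.IsTree :=
      bd_isTree hTree Subgraph.singletonSubgraph_connected ((singletonSubgraph_le_iff v T).2 hv)
    have hl : subLeaves (G.singletonSubgraph v) = ∅ := by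
      ext x
      simp [bd_leaf_iff]
    refine ⟨{G.singletonSubgraph v}, ?_, ⟨?_, Set.empty_subset _⟩, ?_⟩
    · intro B hB
      obtain rfl := Multiset.mem_singleton.1 hB
      refine ⟨hst, ?_, ?_⟩ <;> simp [hl]
    · rw [Multiset.sup_singleton]; exact hst
    · rw [Multiset.map_singleton, Multiset.sum_singleton, bd_weight_single]
      push_cast
      positivity
  · have hk : 1 ≤ Nat.log 2 t := Nat.log_pos (by norm_num) ht
    have hkt : 2 ^ Nat.log 2 t ≤ t := Nat.pow_log_le_self 2 (by omega)
    obtain ⟨T', hle, hverts, hroot⟩ := bd_exists_rooted hTc (hRT hr)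
    have hgood := (hroot.good (w := w) (R := R) hk hkt).resolve_left
      (Set.Nonempty.ne_empty ⟨r, hr, hverts ▸ hRT hr⟩)
    obtain ⟨L, h1, h2, h3, h4⟩ := hgood.solved hk hkt hr
    have hsup : L.sup ≤ T := Multiset.sup_le.2 fun B hB => (h1 B hB).1.trans hle
    refine ⟨L, fun B hB => ?_, ⟨bd_isTree hTree h2 hsup, fun x hx => h3 ⟨hx, hverts ▸ hRT hx⟩⟩, ?_⟩
    · obtain ⟨g1, g2, g3, g4⟩ := h1 B hB
      exact ⟨bd_isTree hTree g2 (g1.trans hle), g3, g4⟩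
    · have h5 := h4.trans (Nat.mul_le_mul_left _ (bd_weight_mono w hle))
      have h6 : (Nat.log 2 t : ℝ) * ((L.map (subWeight w)).sum : ℕ) ≤
          ((Nat.log 2 t : ℝ) + 1) * (subWeight w T : ℝ) := by exact_mod_cast h5
      have hk0 : (0 : ℝ) < (Nat.log 2 t : ℝ) := by exact_mod_cast hk
      have e : (1 + 1 / (Nat.log 2 t : ℝ)) * (subWeight w T : ℝ) =
          (((Nat.log 2 t : ℝ) + 1) * (subWeight w T : ℝ)) / (Nat.log 2 t : ℝ) := by
        field_simp
      rw [e, le_div_iff₀ hk0, mul_comm]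
      exact_mod_cast h6
end
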